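/- arXiv:1901.10678 — 2 statements merged into one kernel-verified Lean document; each statement's English description precedes it below -/
import Mathlib

section
/- The direct backstepping kernel q is a real-analytic function on ℝ² and solves the Goursat problem: q_xx(x,y) − q_yy(x,y) = −(λ/D) q(x,y) for all (x,y) ∈ ℝ², q(0,y) = 0 for all y ∈ ℝ, and q(x,x) = −(λ/(2D)) x for all x ∈ ℝ (so that (d/dx) q(x,x) = −λ/(2D)). -/
/-- `Φ_j(x,y) = 2^{-j} ∑_{m=0}^∞ ((λ/(4D))(y² − x²))^m / (m! (m+j)!)`,
which equals `I_j(z)/z^j` with `z = √((λ/D)(y² − x²))`. -/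
noncomputable def Phi (D lam : ℝ) (j : ℕ) (x y : ℝ) : ℝ :=
  (1 / 2 ^ j) *
    ∑' m : ℕ, (lam / (4 * D) * (y ^ 2 - x ^ 2)) ^ m / (m.factorial * (m + j).factorial : ℝ)

/-- The direct backstepping kernel `q(x,y) = −(λ/D) x Φ₁(x,y)`. -/
noncomputable def qker (D lam : ℝ) (x y : ℝ) : ℝ :=
  -(lam / D) * x * Phi D lam 1 x y

/-!
Up to a constant factor, `q(x, y) = x C₁(c (y² - x²))` with `c = λ / (4D)` and `C₁` a
Bessel–Clifford function. For any twice differentiable profile `f`, the wave operator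
`∂ₓ² - ∂ᵧ²` sends `x f(s)`, `s = c (y² - x²)`, to `-4c x (s f''(s) + 2 f'(s))`. Since `Cⱼ' = Cⱼ₊₁`,
the recurrence `s C₃ + 2 C₂ = C₁` turns the bracket into `C₁(s)`, which is the Goursat equation.
-/

open scoped Nat
open FormalMultilinearSeries

section Calculus

variable {𝕜 : Type*} [NontriviallyNormedField 𝕜]

theorem iteratedDeriv_two_eq_of_hasDerivAt {E : Type*} [NormedAddCommGroup E] [NormedSpace 𝕜 E]
    {f f' : 𝕜 → E} {f'' : E} {x : 𝕜} (hf : ∀ t, HasDerivAt f (f' t) t)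
    (hf' : HasDerivAt f' f'' x) : iteratedDeriv 2 f x = f'' := by
  rw [iteratedDeriv_succ, iteratedDeriv_one, funext fun t => (hf t).deriv, hf'.deriv]

theorem hasSum_deriv_of_hasFPowerSeriesOnBall {E : Type*} [NormedAddCommGroup E] [NormedSpace 𝕜 E]
    [CompleteSpace E] {f : 𝕜 → E} {p : FormalMultilinearSeries 𝕜 𝕜 E} {x y : 𝕜} {r : ENNReal}
    (hf : HasFPowerSeriesOnBall f p x r) (hy : y ∈ Metric.eball 0 r) :
    HasSum (fun n => y ^ n • (n + 1) • p.coeff (n + 1)) (deriv f (x + y)) := by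
  have hsum := (hf.fderiv.hasSum hy).mapL (ContinuousLinearMap.apply 𝕜 E 1)
  simpa [apply_eq_pow_smul_coeff] using hsum

end Calculus

section WaveOperator

variable {𝕜 : Type*} [NontriviallyNormedField 𝕜] {f : 𝕜 → 𝕜} {c x y : 𝕜}

theorem hasDerivAt_comp_mul_sq_sub_sq_left {f' : 𝕜}
    (hf : HasDerivAt f f' (c * (y ^ 2 - x ^ 2))) :
    HasDerivAt (fun x => f (c * (y ^ 2 - x ^ 2))) (-(2 * c * x) * f') x := by
  have hs : HasDerivAt (fun x => c * (y ^ 2 - x ^ 2)) (-(2 * c * x)) x :=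
    (((hasDerivAt_pow 2 x).const_sub (y ^ 2)).const_mul c).congr_deriv (by push_cast; ring)
  exact (hf.comp x hs).congr_deriv (mul_comm _ _)

theorem hasDerivAt_comp_mul_sq_sub_sq_right {f' : 𝕜}
    (hf : HasDerivAt f f' (c * (y ^ 2 - x ^ 2))) :
    HasDerivAt (fun y => f (c * (y ^ 2 - x ^ 2))) (2 * c * y * f') y := by
  have hs : HasDerivAt (fun y => c * (y ^ 2 - x ^ 2)) (2 * c * y) y :=
    (((hasDerivAt_pow 2 y).sub_const (x ^ 2)).const_mul c).congr_deriv (by push_cast; ring)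
  exact (hf.comp y hs).congr_deriv (mul_comm _ _)

variable {f' : 𝕜 → 𝕜} {f'' : 𝕜}

theorem iteratedDeriv_two_mul_comp_mul_sq_sub_sq_left (hf : ∀ s, HasDerivAt f (f' s) s)
    (hf' : HasDerivAt f' f'' (c * (y ^ 2 - x ^ 2))) :
    iteratedDeriv 2 (fun x => x * f (c * (y ^ 2 - x ^ 2))) x =
      4 * c ^ 2 * x ^ 3 * f'' - 6 * c * x * f' (c * (y ^ 2 - x ^ 2)) := by
  have h_first (x : 𝕜) : HasDerivAt (fun x => x * f (c * (y ^ 2 - x ^ 2)))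
      (f (c * (y ^ 2 - x ^ 2)) - 2 * c * (x ^ 2 * f' (c * (y ^ 2 - x ^ 2)))) x :=
    ((hasDerivAt_id' x).mul (hasDerivAt_comp_mul_sq_sub_sq_left (hf _))).congr_deriv (by ring)
  have h_second := (hasDerivAt_comp_mul_sq_sub_sq_left (hf (c * (y ^ 2 - x ^ 2)))).sub
    (((hasDerivAt_pow 2 x).mul (hasDerivAt_comp_mul_sq_sub_sq_left hf')).const_mul (2 * c))
  rw [iteratedDeriv_two_eq_of_hasDerivAt h_first h_second]
  push_cast
  ring

theorem iteratedDeriv_two_comp_mul_sq_sub_sq_right (hf : ∀ s, HasDerivAt f (f' s) s)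
    (hf' : HasDerivAt f' f'' (c * (y ^ 2 - x ^ 2))) :
    iteratedDeriv 2 (fun y => f (c * (y ^ 2 - x ^ 2))) y =
      2 * c * f' (c * (y ^ 2 - x ^ 2)) + 4 * c ^ 2 * y ^ 2 * f'' := by
  have h_first (y : 𝕜) := hasDerivAt_comp_mul_sq_sub_sq_right (hf (c * (y ^ 2 - x ^ 2)))
  have h_second := ((hasDerivAt_id' y).const_mul (2 * c)).mul
    (hasDerivAt_comp_mul_sq_sub_sq_right hf')
  rw [iteratedDeriv_two_eq_of_hasDerivAt h_first h_second]
  ring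

theorem waveOperator_mul_comp_mul_sq_sub_sq (hf : ∀ s, HasDerivAt f (f' s) s)
    (hf' : HasDerivAt f' f'' (c * (y ^ 2 - x ^ 2))) :
    iteratedDeriv 2 (fun x => x * f (c * (y ^ 2 - x ^ 2))) x -
        iteratedDeriv 2 (fun y => x * f (c * (y ^ 2 - x ^ 2))) y =
      -(4 * c) * (x * (c * (y ^ 2 - x ^ 2) * f'' + 2 * f' (c * (y ^ 2 - x ^ 2)))) := by
  rw [iteratedDeriv_const_mul_field, iteratedDeriv_two_mul_comp_mul_sq_sub_sq_left hf hf',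
    iteratedDeriv_two_comp_mul_sq_sub_sq_right hf hf']
  ring

end WaveOperator

section BesselClifford

variable {𝕜 : Type*} [RCLike 𝕜]

/-- The Bessel–Clifford function `C_j` of integer order `j ≥ 0`, the entire function through which
the Bessel functions factor: `I_j(z) = (z / 2) ^ j * C_j(z² / 4)` and
`J_j(z) = (z / 2) ^ j * C_j(-z² / 4)`. -/
noncomputable def besselClifford (j : ℕ) (s : 𝕜) : 𝕜 :=
  ∑' m : ℕ, s ^ m / (m ! * (m + j)!)

theorem summable_norm_besselClifford (j : ℕ) (s : 𝕜) :
    Summable fun m : ℕ => ‖s ^ m / (m ! * (m + j)! : 𝕜)‖ := by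
  refine (Real.summable_pow_div_factorial ‖s‖).of_nonneg_of_le (fun _ => norm_nonneg _) fun m => ?_
  rw [norm_div, norm_pow, norm_mul, RCLike.norm_natCast, RCLike.norm_natCast]
  gcongr
  exact le_mul_of_one_le_right (by positivity) (mod_cast (m + j).factorial_pos)

theorem hasSum_besselClifford (j : ℕ) (s : 𝕜) :
    HasSum (fun m : ℕ => s ^ m / (m ! * (m + j)!)) (besselClifford j s) :=
  (summable_norm_besselClifford j s).of_norm.hasSum

theorem hasFPowerSeriesOnBall_besselClifford (j : ℕ) :
    HasFPowerSeriesOnBall (besselClifford j)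
      (ofScalars 𝕜 fun m => (m ! * (m + j)! : 𝕜)⁻¹) 0 ⊤ := by
  set p := ofScalars 𝕜 fun m => (m ! * (m + j)! : 𝕜)⁻¹ with hp
  have h_radius : p.radius = ⊤ := radius_eq_top_of_summable_norm _ fun r => by
    simpa [hp, ofScalars_norm, div_eq_inv_mul] using
      summable_norm_besselClifford j ((r : ℝ) : 𝕜)
  have h_sum : p.sum = besselClifford j := funext fun s => by
    simp only [besselClifford, div_eq_inv_mul]
    exact ofScalars_sum_eq _ s
  simpa only [h_sum, h_radius] using p.hasFPowerSeriesOnBall (by simp [h_radius])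

theorem analyticAt_besselClifford (j : ℕ) (s : 𝕜) : AnalyticAt 𝕜 (besselClifford j) s :=
  (hasFPowerSeriesOnBall_besselClifford j).analyticAt_of_mem (by simp)

theorem hasDerivAt_besselClifford (j : ℕ) (s : 𝕜) :
    HasDerivAt (besselClifford j) (besselClifford (j + 1) s) s := by
  have h_deriv : HasSum (fun m : ℕ => s ^ m / (m ! * (m + (j + 1))!))
      (deriv (besselClifford j) s) := by
    have h_series := hasSum_deriv_of_hasFPowerSeriesOnBall
      (hasFPowerSeriesOnBall_besselClifford (𝕜 := 𝕜) j) (y := s) (by simp)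
    rw [zero_add] at h_series
    refine h_series.congr_fun fun m => ?_
    have h_ne : (m : 𝕜) + 1 ≠ 0 := m.cast_add_one_ne_zero
    rw [coeff_ofScalars, add_right_comm, Nat.factorial_succ m, ← add_assoc, smul_eq_mul,
      nsmul_eq_mul]
    push_cast
    field_simp
  exact (analyticAt_besselClifford j s).differentiableAt.hasDerivAt.congr_deriv
    (h_deriv.unique (hasSum_besselClifford (j + 1) s))

theorem besselClifford_zero_right (j : ℕ) : besselClifford j (0 : 𝕜) = (j ! : 𝕜)⁻¹ := by
  rw [besselClifford, tsum_eq_single 0 fun m hm => by simp [hm]]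
  simp

theorem besselClifford_recurrence (j : ℕ) (s : 𝕜) :
    s * besselClifford (j + 2) s + (j + 1) * besselClifford (j + 1) s = besselClifford j s := by
  have h_shift : HasSum (fun m : ℕ => m * (s ^ m / (m ! * (m + (j + 1))! : 𝕜)))
      (s * besselClifford (j + 2) s) := by
    rw [← hasSum_nat_add_iff' 1, Finset.sum_range_one, Nat.cast_zero, zero_mul, sub_zero]
    refine ((hasSum_besselClifford (j + 2) s).mul_left s).congr_fun fun m => ?_
    have h_ne : (m : 𝕜) + 1 ≠ 0 := m.cast_add_one_ne_zero
    rw [show m + 1 + (j + 1) = m + (j + 2) by ring, Nat.factorial_succ m]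
    push_cast
    field_simp
    ring
  refine (h_shift.add ((hasSum_besselClifford (j + 1) s).mul_left (j + 1 : 𝕜))).unique ?_
  refine (hasSum_besselClifford j s).congr_fun fun m => ?_
  rw [← add_assoc m j 1, Nat.factorial_succ (m + j)]
  have h_ne : (m : 𝕜) + j + 1 ≠ 0 := mod_cast (m + j).succ_ne_zero
  push_cast
  field_simp
  ring

end BesselClifford

theorem qker_eq_mul_besselClifford (D lam x y : ℝ) :
    qker D lam x y =
      -(lam / (2 * D)) * (x * besselClifford 1 (lam / (4 * D) * (y ^ 2 - x ^ 2))) := by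
  simp only [qker, Phi, besselClifford]
  ring

theorem analyticAt_qker (D lam : ℝ) (p : ℝ × ℝ) :
    AnalyticAt ℝ (fun p : ℝ × ℝ => qker D lam p.1 p.2) p := by
  simp only [qker_eq_mul_besselClifford]
  have h_arg : AnalyticAt ℝ (fun p : ℝ × ℝ => lam / (4 * D) * (p.2 ^ 2 - p.1 ^ 2)) p :=
    analyticAt_const.mul ((analyticAt_snd.pow 2).sub (analyticAt_fst.pow 2))
  exact analyticAt_const.mul
    (analyticAt_fst.mul ((analyticAt_besselClifford 1 _).comp_of_eq h_arg rfl))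

theorem qker_kleinGordon (D lam x y : ℝ) :
    iteratedDeriv 2 (fun x => qker D lam x y) x - iteratedDeriv 2 (fun y => qker D lam x y) y =
      -(lam / D) * qker D lam x y := by
  have h_rec (s : ℝ) : s * besselClifford 3 s + 2 * besselClifford 2 s = besselClifford 1 s := by
    simpa only [Nat.cast_one, one_add_one_eq_two] using besselClifford_recurrence 1 s
  simp only [qker_eq_mul_besselClifford]
  rw [iteratedDeriv_const_mul_field, iteratedDeriv_const_mul_field, ← mul_sub,
    waveOperator_mul_comp_mul_sq_sub_sq (hasDerivAt_besselClifford 1)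
      (hasDerivAt_besselClifford 2 _), h_rec]
  ring

theorem qker_zero_left (D lam y : ℝ) : qker D lam 0 y = 0 := by
  simp [qker]

theorem qker_self (D lam x : ℝ) : qker D lam x x = -(lam / (2 * D)) * x := by
  simp [qker_eq_mul_besselClifford, besselClifford_zero_right]

theorem direct_kernel_goursat_general (D lam : ℝ) (_hD : D ≠ 0) :
    (∀ p : ℝ × ℝ, AnalyticAt ℝ (fun p : ℝ × ℝ => qker D lam p.1 p.2) p) ∧
    (∀ x y : ℝ,
      iteratedDeriv 2 (fun x' => qker D lam x' y) x
        - iteratedDeriv 2 (fun y' => qker D lam x y') y = -(lam / D) * qker D lam x y) ∧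
    (∀ y : ℝ, qker D lam 0 y = 0) ∧
    (∀ x : ℝ, qker D lam x x = -(lam / (2 * D)) * x) :=
  ⟨analyticAt_qker D lam, qker_kleinGordon D lam, qker_zero_left D lam, qker_self D lam⟩

/-- The direct backstepping kernel `q` is real-analytic on `ℝ²` and solves the
Goursat problem `q_xx − q_yy = −(λ/D) q`, `q(0,y) = 0`, `q(x,x) = −(λ/(2D)) x`. -/
theorem direct_kernel_goursat (D lam : ℝ) (hD : 0 < D) (hlam : 0 < lam) :
    (∀ p : ℝ × ℝ, AnalyticAt ℝ (fun p : ℝ × ℝ => qker D lam p.1 p.2) p) ∧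
    (∀ x y : ℝ,
      iteratedDeriv 2 (fun x' => qker D lam x' y) x
        - iteratedDeriv 2 (fun y' => qker D lam x y') y = -(lam / D) * qker D lam x y) ∧
    (∀ y : ℝ, qker D lam 0 y = 0) ∧
    (∀ x : ℝ, qker D lam x x = -(lam / (2 * D)) * x) :=
  direct_kernel_goursat_general D lam hD.ne'
end

section
/- For every H̄ > 0 and every ε > 0 there exist positive constants M̲ > 0 and M̄ > 0 such that for every H ∈ (0, H̄], every h ∈ ℝ, and every continuous function T̃ : [0,H] → ℝ, setting w(x) := T̃(x) − ∫_x^H r(x,y) T̃(y) dy − φ(x,H) h, the norm equivalence M̲ · ( ∫₀^H T̃(x)² dx + h² ) ≤ (1/2) ∫₀^H w(x)² dx + (ε/(2β)) h² ≤ M̄ · ( ∫₀^H T̃(x)² dx + h² ) holds. -/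
/-- `Ψ_j(x,y) = 2^{-j} ∑_{m=0}^∞ (−(λ/(4D))(y² − x²))^m / (m! (m+j)!)`. -/
noncomputable def Psi (D lam : ℝ) (j : ℕ) (x y : ℝ) : ℝ :=
  (1 / 2 ^ j) *
    ∑' m : ℕ, (-(lam / (4 * D)) * (y ^ 2 - x ^ 2)) ^ m / (m.factorial * (m + j).factorial : ℝ)

/-- The inverse backstepping kernel `r(x,y) = (λ/D) x Ψ₁(x,y)`. -/
noncomputable def rker (D lam : ℝ) (x y : ℝ) : ℝ :=
  lam / D * x * Psi D lam 1 x y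

/-- `φ(x,H) = (D/β) r(x,H)`. -/
noncomputable def phiK (D lam beta : ℝ) (x H : ℝ) : ℝ :=
  D / beta * rker D lam x H

/-!
The map `T ↦ w` is a Volterra perturbation of the identity, shifted by
`q x := phiK D lam beta x H * h`, so both inequalities hold for any continuous kernel `k`.
By Cauchy–Schwarz, `(∫ y in x..H, k x y * T y) ^ 2 ≤ N * ∫ y in x..H, T y ^ 2`, with `N` a bound
on `∫ y in x..H, k x y ^ 2`. Integrating over `x` bounds `w` by `T` and `h`. Conversely, solving
for `T` gives `T x ^ 2 ≤ 3 * (w x ^ 2 + q x ^ 2) + 3 * N * ∫ y in x..H, T y ^ 2`, and Grönwall's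
inequality, run backwards from `H`, bounds `T` by `w` and `h` without inverting the transformation.
The constants depend on `H` only through the upper bound `Hbar`.
-/

open MeasureTheory Set Function

theorem add_add_sq_le (x y z : ℝ) : (x + y + z) ^ 2 ≤ 3 * (x ^ 2 + y ^ 2 + z ^ 2) := by
  linarith [sq_nonneg (x - y), sq_nonneg (y - z), sq_nonneg (x - z)]

theorem sq_integral_mul_le {α : Type*} [MeasurableSpace α] {μ : Measure α} {f g : α → ℝ}
    (hf : MemLp f 2 μ) (hg : MemLp g 2 μ) :
    (∫ x, f x * g x ∂μ) ^ 2 ≤ (∫ x, f x ^ 2 ∂μ) * ∫ x, g x ^ 2 ∂μ := by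
  have hquadratic (t : ℝ) : 0 ≤ (∫ x, g x ^ 2 ∂μ) * (t * t) + 2 * (∫ x, f x * g x ∂μ) * t +
      ∫ x, f x ^ 2 ∂μ := by
    have hgg_int : Integrable (fun x ↦ t * t * g x ^ 2) μ := hg.integrable_sq.const_mul _
    have hfg_int : Integrable (fun x ↦ 2 * t * (f x * g x)) μ := (hf.integrable_mul hg).const_mul _
    have hsum_int : Integrable (fun x ↦ t * t * g x ^ 2 + 2 * t * (f x * g x)) μ :=
      hgg_int.add hfg_int
    calc 0 ≤ ∫ x, (t * g x + f x) ^ 2 ∂μ := integral_nonneg fun x ↦ sq_nonneg (t * g x + f x)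
      _ = ∫ x, (t * t * g x ^ 2 + 2 * t * (f x * g x) + f x ^ 2) ∂μ := by
        congr with x
        ring
      _ = _ := by
        rw [integral_add hsum_int hf.integrable_sq, integral_add hgg_int hfg_int,
          integral_const_mul, integral_const_mul]
        ring
  have hdiscrim := discrim_le_zero hquadratic
  rw [discrim] at hdiscrim
  linarith

theorem sq_intervalIntegral_mul_le {f g : ℝ → ℝ} {a b : ℝ} (hab : a ≤ b)
    (hf : ContinuousOn f (Icc a b)) (hg : ContinuousOn g (Icc a b)) :
    (∫ x in a..b, f x * g x) ^ 2 ≤ (∫ x in a..b, f x ^ 2) * ∫ x in a..b, g x ^ 2 := by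
  have hmemLp {φ : ℝ → ℝ} (hφ : ContinuousOn φ (Icc a b)) :
      MemLp φ 2 (volume.restrict (Ioc a b)) :=
    (memLp_two_iff_integrable_sq
      ((hφ.mono Ioc_subset_Icc_self).aestronglyMeasurable measurableSet_Ioc)).2
      ((hφ.pow 2).integrableOn_Icc.mono_set Ioc_subset_Icc_self)
  simp only [intervalIntegral.integral_of_le hab]
  exact sq_integral_mul_le (hmemLp hf) (hmemLp hg)

theorem continuousOn_integral_left {f : ℝ → ℝ} {a b : ℝ} (hab : a ≤ b)
    (hf : ContinuousOn f (Icc a b)) : ContinuousOn (fun x ↦ ∫ y in x..b, f y) (Icc a b) := by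
  rw [← uIcc_of_le hab] at hf ⊢
  exact intervalIntegral.continuousOn_primitive_interval_left hf.integrableOn_uIcc

theorem integral_eq_integral_exp_mul_sub_mul_integral {f : ℝ → ℝ} {a b : ℝ} (hab : a ≤ b) (c : ℝ)
    (hf : ContinuousOn f (Icc a b)) :
    ∫ x in a..b, f x = ∫ x in a..b, Real.exp (c * (x - a)) * (f x - c * ∫ y in x..b, f y) := by
  set u : ℝ → ℝ := fun x ↦ ∫ y in x..b, f y
  have hu_cont : ContinuousOn u (Icc a b) := continuousOn_integral_left hab hf
  have hu_deriv : ∀ x ∈ Ioo a b, HasDerivAt u (-f x) x := fun x hx ↦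
    intervalIntegral.integral_hasDerivAt_left
      ((hf.mono (Icc_subset_Icc_left hx.1.le)).intervalIntegrable_of_Icc hx.2.le)
      ((hf.mono Ioo_subset_Icc_self).stronglyMeasurableAtFilter isOpen_Ioo x hx)
      (hf.continuousAt (Icc_mem_nhds hx.1 hx.2))
  have hexp_deriv (x : ℝ) :
      HasDerivAt (fun x ↦ Real.exp (c * (x - a))) (Real.exp (c * (x - a)) * c) x := by
    simpa using (((hasDerivAt_id x).sub_const a).const_mul c).exp
  have hexp_cont : Continuous fun x ↦ Real.exp (c * (x - a)) := by fun_prop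
  have hint := intervalIntegral.integral_eq_sub_of_hasDerivAt_of_le hab
    (hexp_cont.continuousOn.mul hu_cont) (fun x hx ↦ (hexp_deriv x).mul (hu_deriv x hx))
    (ContinuousOn.intervalIntegrable_of_Icc hab (by fun_prop))
  calc u a = -∫ x in a..b, (Real.exp (c * (x - a)) * c * u x + Real.exp (c * (x - a)) * -f x) := by
        rw [hint]
        simp [u]
    _ = ∫ x in a..b, Real.exp (c * (x - a)) * (f x - c * u x) := by
        rw [← intervalIntegral.integral_neg]
        congr with x
        ring

theorem integral_le_exp_mul_integral_of_le_add_mul_integral {f g : ℝ → ℝ} {a b c : ℝ}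
    (hab : a ≤ b) (hc : 0 ≤ c) (hf : ContinuousOn f (Icc a b)) (hg : ContinuousOn g (Icc a b))
    (hg₀ : ∀ x ∈ Icc a b, 0 ≤ g x)
    (hfg : ∀ x ∈ Icc a b, f x ≤ g x + c * ∫ y in x..b, f y) :
    ∫ x in a..b, f x ≤ Real.exp (c * (b - a)) * ∫ x in a..b, g x := by
  have htail_cont := continuousOn_integral_left hab hf
  rw [integral_eq_integral_exp_mul_sub_mul_integral hab c hf, ← intervalIntegral.integral_const_mul]
  refine intervalIntegral.integral_mono_on hab
    (ContinuousOn.intervalIntegrable_of_Icc hab (by fun_prop))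
    (ContinuousOn.intervalIntegrable_of_Icc hab (by fun_prop)) fun x hx ↦ ?_
  calc Real.exp (c * (x - a)) * (f x - c * ∫ y in x..b, f y) ≤ Real.exp (c * (x - a)) * g x := by
        gcongr
        exact sub_le_iff_le_add.2 (hfg x hx)
    _ ≤ Real.exp (c * (b - a)) * g x := by
        gcongr
        exacts [hg₀ x hx, hx.2]

theorem exists_forall_integral_sq_le {k : ℝ → ℝ → ℝ} (hk : Continuous (uncurry k)) (a b : ℝ) :
    ∃ N, 0 ≤ N ∧ ∀ x ∈ Icc a b, ∀ c d, a ≤ c → c ≤ d → d ≤ b → ∫ y in c..d, k x y ^ 2 ≤ N := by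
  have hcont : Continuous fun x ↦ ∫ y in a..b, k x y ^ 2 :=
    intervalIntegral.continuous_parametric_intervalIntegral_of_continuous' (hk.pow 2) a b
  obtain ⟨N, hN₀, hN⟩ := (isCompact_Icc.bddAbove_image hcont.continuousOn).exists_ge 0
  refine ⟨N, hN₀, fun x hx c d hac hcd hdb ↦ le_trans ?_ (hN _ (mem_image_of_mem _ hx))⟩
  exact intervalIntegral.integral_mono_interval hac hcd hdb (ae_of_all _ fun y ↦ sq_nonneg (k x y))
    (((hk.uncurry_left x).pow 2).intervalIntegrable a b)

theorem continuous_tsum_pow_div_factorial_mul_factorial (j : ℕ) :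
    Continuous fun s : ℝ ↦ ∑' m : ℕ, s ^ m / (m.factorial * (m + j).factorial : ℝ) := by
  refine continuous_iff_continuousAt.2 fun s ↦ ?_
  have hball : ContinuousOn (fun s : ℝ ↦ ∑' m : ℕ, s ^ m / (m.factorial * (m + j).factorial : ℝ))
      (Metric.ball 0 (|s| + 1)) := by
    refine continuousOn_tsum (fun m ↦ by fun_prop)
      (Real.summable_pow_div_factorial (|s| + 1)) fun m x hx ↦ ?_
    have hx_le : |x| ≤ |s| + 1 := (mem_ball_zero_iff.1 hx).le
    have hfactorial : (m.factorial : ℝ) ≤ m.factorial * (m + j).factorial :=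
      le_mul_of_one_le_right (by positivity) (by exact_mod_cast (m + j).factorial_pos)
    rw [Real.norm_eq_abs, abs_div, abs_pow, abs_of_nonneg (by positivity : (0 : ℝ) ≤ _ * _)]
    gcongr
  exact hball.continuousAt (Metric.isOpen_ball.mem_nhds (by simp))

section Kernels

variable (D lam beta : ℝ)

theorem continuous_Psi (j : ℕ) : Continuous (uncurry (Psi D lam j)) :=
  continuous_const.mul <| (continuous_tsum_pow_div_factorial_mul_factorial j).comp
    (by fun_prop : Continuous fun z : ℝ × ℝ ↦ -(lam / (4 * D)) * (z.2 ^ 2 - z.1 ^ 2))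

theorem continuous_rker : Continuous (uncurry (rker D lam)) :=
  (continuous_const.mul continuous_fst).mul (continuous_Psi D lam 1)

theorem continuous_phiK : Continuous (uncurry (phiK D lam beta)) :=
  continuous_const.mul (continuous_rker D lam)

end Kernels

/-- The Volterra integral operator with kernel `k` that occurs in backstepping transformations.
It integrates from the evaluation point up to the fixed endpoint `b`. -/
noncomputable def volterra (k : ℝ → ℝ → ℝ) (b : ℝ) (f : ℝ → ℝ) (x : ℝ) : ℝ :=
  ∫ y in x..b, k x y * f y

section Volterra

variable {k : ℝ → ℝ → ℝ} {f q w : ℝ → ℝ} {a b N : ℝ}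

theorem continuousOn_volterra (hk : Continuous (uncurry k)) (hab : a ≤ b)
    (hf : ContinuousOn f (Icc a b)) : ContinuousOn (volterra k b f) (Icc a b) := by
  set g : ℝ → ℝ := IccExtend hab ((Icc a b).domRestrict f)
  have hg : Continuous g := (continuousOn_iff_continuous_domRestrict.1 hf).Icc_extend'
  have hfg : EqOn f g (Icc a b) := fun x hx ↦
    (IccExtend_of_mem hab ((Icc a b).domRestrict f) hx).symm
  have hcont : Continuous (volterra k b g) := by
    have hprimitive : Continuous fun x ↦ ∫ y in b..x, k x y * g y :=
      intervalIntegral.continuous_parametric_intervalIntegral_of_continuous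
        (hk.mul (hg.comp continuous_snd)) continuous_id
    exact hprimitive.neg.congr fun x ↦ (intervalIntegral.integral_symm b x).symm
  refine hcont.continuousOn.congr fun x hx ↦ intervalIntegral.integral_congr fun y hy ↦ ?_
  rw [uIcc_of_le hx.2] at hy
  simp only [hfg ⟨hx.1.trans hy.1, hy.2⟩]

theorem sq_volterra_le (hk : Continuous (uncurry k)) (hf : ContinuousOn f (Icc a b))
    (hN : ∀ x ∈ Icc a b, ∫ y in x..b, k x y ^ 2 ≤ N) {x : ℝ} (hx : x ∈ Icc a b) :
    volterra k b f x ^ 2 ≤ N * ∫ y in x..b, f y ^ 2 :=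
  (sq_intervalIntegral_mul_le hx.2 (hk.uncurry_left x).continuousOn
    (hf.mono (Icc_subset_Icc_left hx.1))).trans <|
    mul_le_mul_of_nonneg_right (hN x hx) <|
      intervalIntegral.integral_nonneg hx.2 fun y _ ↦ sq_nonneg (f y)

theorem continuousOn_of_eq_sub_volterra_sub (hk : Continuous (uncurry k)) (hab : a ≤ b)
    (hf : ContinuousOn f (Icc a b)) (hq : ContinuousOn q (Icc a b))
    (hw : ∀ x ∈ Icc a b, w x = f x - volterra k b f x - q x) : ContinuousOn w (Icc a b) :=
  ((hf.sub (continuousOn_volterra hk hab hf)).sub hq).congr hw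

theorem integral_sq_le_of_eq_sub_volterra_sub (hk : Continuous (uncurry k)) (hab : a ≤ b)
    (hf : ContinuousOn f (Icc a b)) (hq : ContinuousOn q (Icc a b))
    (hN : ∀ x ∈ Icc a b, ∫ y in x..b, k x y ^ 2 ≤ N)
    (hw : ∀ x ∈ Icc a b, w x = f x - volterra k b f x - q x) :
    ∫ x in a..b, w x ^ 2 ≤
      3 * (1 + N * (b - a)) * (∫ x in a..b, f x ^ 2) + 3 * ∫ x in a..b, q x ^ 2 := by
  have hN₀ : 0 ≤ N := by simpa using hN b ⟨hab, le_rfl⟩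
  have hw_cont := continuousOn_of_eq_sub_volterra_sub hk hab hf hq hw
  have hf_int : IntervalIntegrable (fun x ↦ f x ^ 2) volume a b :=
    (hf.pow 2).intervalIntegrable_of_Icc hab
  have hq_int : IntervalIntegrable (fun x ↦ q x ^ 2) volume a b :=
    (hq.pow 2).intervalIntegrable_of_Icc hab
  set I := ∫ x in a..b, f x ^ 2
  have hbound : ∀ x ∈ Icc a b, w x ^ 2 ≤ 3 * (f x ^ 2 + N * I + q x ^ 2) := by
    intro x hx
    have htail : ∫ y in x..b, f y ^ 2 ≤ I :=
      intervalIntegral.integral_mono_interval hx.1 hx.2 le_rfl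
        (ae_of_all _ fun y ↦ sq_nonneg (f y)) hf_int
    calc w x ^ 2 = (f x + -volterra k b f x + -q x) ^ 2 := by rw [hw x hx]; ring
      _ ≤ 3 * (f x ^ 2 + volterra k b f x ^ 2 + q x ^ 2) := by
        simpa only [neg_sq] using add_add_sq_le (f x) (-volterra k b f x) (-q x)
      _ ≤ 3 * (f x ^ 2 + N * I + q x ^ 2) := by
        gcongr
        exact (sq_volterra_le hk hf hN hx).trans (by gcongr)
  calc ∫ x in a..b, w x ^ 2 ≤ ∫ x in a..b, 3 * (f x ^ 2 + N * I + q x ^ 2) :=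
        intervalIntegral.integral_mono_on hab ((hw_cont.pow 2).intervalIntegrable_of_Icc hab)
          (((hf_int.add intervalIntegrable_const).add hq_int).const_mul 3) hbound
    _ = 3 * (1 + N * (b - a)) * I + 3 * ∫ x in a..b, q x ^ 2 := by
      rw [intervalIntegral.integral_const_mul,
        intervalIntegral.integral_add (hf_int.add intervalIntegrable_const) hq_int,
        intervalIntegral.integral_add hf_int intervalIntegrable_const,
        intervalIntegral.integral_const, smul_eq_mul]
      ring

theorem integral_sq_le_exp_mul_of_eq_sub_volterra_sub (hk : Continuous (uncurry k)) (hab : a ≤ b)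
    (hf : ContinuousOn f (Icc a b)) (hq : ContinuousOn q (Icc a b))
    (hN : ∀ x ∈ Icc a b, ∫ y in x..b, k x y ^ 2 ≤ N)
    (hw : ∀ x ∈ Icc a b, w x = f x - volterra k b f x - q x) :
    ∫ x in a..b, f x ^ 2 ≤ 3 * Real.exp (3 * N * (b - a)) *
      ((∫ x in a..b, w x ^ 2) + ∫ x in a..b, q x ^ 2) := by
  have hN₀ : 0 ≤ N := by simpa using hN b ⟨hab, le_rfl⟩
  have hw_cont := continuousOn_of_eq_sub_volterra_sub hk hab hf hq hw
  have hbound : ∀ x ∈ Icc a b,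
      f x ^ 2 ≤ 3 * (w x ^ 2 + q x ^ 2) + 3 * N * ∫ y in x..b, f y ^ 2 := by
    intro x hx
    calc f x ^ 2 = (w x + volterra k b f x + q x) ^ 2 := by rw [hw x hx]; ring
      _ ≤ 3 * (w x ^ 2 + volterra k b f x ^ 2 + q x ^ 2) := add_add_sq_le _ _ _
      _ ≤ 3 * (w x ^ 2 + q x ^ 2) + 3 * N * ∫ y in x..b, f y ^ 2 := by
        linarith [sq_volterra_le hk hf hN hx]
  calc ∫ x in a..b, f x ^ 2 ≤
        Real.exp (3 * N * (b - a)) * ∫ x in a..b, 3 * (w x ^ 2 + q x ^ 2) :=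
        integral_le_exp_mul_integral_of_le_add_mul_integral hab (by positivity) (hf.pow 2)
          (by fun_prop) (fun x _ ↦ by positivity) hbound
    _ = 3 * Real.exp (3 * N * (b - a)) * ((∫ x in a..b, w x ^ 2) + ∫ x in a..b, q x ^ 2) := by
      rw [intervalIntegral.integral_const_mul, intervalIntegral.integral_add
        (ContinuousOn.intervalIntegrable_of_Icc hab (by fun_prop))
        (ContinuousOn.intervalIntegrable_of_Icc hab (by fun_prop))]
      ring

end Volterra

theorem exists_pos_forall_mul_add_le_and_le_mul_add {A B P Q α δ : ℝ} (hA : 0 ≤ A) (hB : 0 ≤ B)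
    (hP : 0 ≤ P) (hQ : 0 ≤ Q) (hα : 0 < α) (hδ : 0 < δ) :
    ∃ m > 0, ∃ M > 0, ∀ X Y s : ℝ, 0 ≤ X → 0 ≤ Y → 0 ≤ s →
      X ≤ A * (Y + P * s) → Y ≤ B * X + Q * s →
        m * (X + s) ≤ α * Y + δ * s ∧ α * Y + δ * s ≤ M * (X + s) := by
  set C := A / α + (A * P + 1) / δ
  have hC : 0 < C := by positivity
  refine ⟨C⁻¹, inv_pos.2 hC, α * (B + Q) + δ, by positivity,
    fun X Y s hX hY hs hXY hYX ↦ ⟨?_, ?_⟩⟩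
  · rw [inv_mul_le_iff₀ hC]
    calc X + s ≤ A * Y + (A * P + 1) * s := by linarith
      _ = A / α * (α * Y) + (A * P + 1) / δ * (δ * s) := by field_simp
      _ ≤ C * (α * Y) + C * (δ * s) := by
        gcongr
        · exact le_add_of_nonneg_right (by positivity)
        · exact le_add_of_nonneg_left (by positivity)
      _ = C * (α * Y + δ * s) := by ring
  · calc α * Y + δ * s ≤ α * (B * X + Q * s) + δ * s := by gcongr
      _ ≤ α * ((B + Q) * (X + s)) + δ * (X + s) := by
        gcongr
        · linarith [mul_nonneg hB hs, mul_nonneg hQ hX]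
        · exact le_add_of_nonneg_left hX
      _ = (α * (B + Q) + δ) * (X + s) := by ring

theorem lyapunov_norm_equivalence_general {k p : ℝ → ℝ → ℝ} (hk : Continuous (uncurry k))
    (hp : Continuous (uncurry p)) {Hbar α δ : ℝ} (hHbar : 0 ≤ Hbar) (hα : 0 < α)
    (hδ : 0 < δ) :
    ∃ Ml > (0 : ℝ), ∃ Mu > (0 : ℝ), ∀ H ∈ Ioc 0 Hbar, ∀ h : ℝ, ∀ T : ℝ → ℝ,
      ContinuousOn T (Icc 0 H) → ∀ w : ℝ → ℝ,
        (∀ x ∈ Icc 0 H, w x = T x - (∫ y in x..H, k x y * T y) - p x H * h) →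
          Ml * ((∫ x in 0..H, T x ^ 2) + h ^ 2) ≤ α * (∫ x in 0..H, w x ^ 2) + δ * h ^ 2 ∧
            α * (∫ x in 0..H, w x ^ 2) + δ * h ^ 2 ≤
              Mu * ((∫ x in 0..H, T x ^ 2) + h ^ 2) := by
  obtain ⟨N, hN₀, hN⟩ := exists_forall_integral_sq_le hk 0 Hbar
  obtain ⟨P, hP₀, hP⟩ :=
    exists_forall_integral_sq_le (k := fun H x ↦ p x H) (hp.comp continuous_swap) 0 Hbar
  obtain ⟨Ml, hMl, Mu, hMu, hequiv⟩ := exists_pos_forall_mul_add_le_and_le_mul_add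
    (A := 3 * Real.exp (3 * N * Hbar)) (B := 3 * (1 + N * Hbar)) (P := P) (Q := 3 * P)
    (by positivity) (by positivity) hP₀ (by positivity) hα hδ
  refine ⟨Ml, hMl, Mu, hMu, fun H ⟨hH₀, hH⟩ h T hT w hw ↦ ?_⟩
  have hq : ContinuousOn (fun x ↦ p x H * h) (Icc 0 H) :=
    ((hp.uncurry_right H).mul_const h).continuousOn
  have hNH : ∀ x ∈ Icc 0 H, ∫ y in x..H, k x y ^ 2 ≤ N := fun x hx ↦
    hN x ⟨hx.1, hx.2.trans hH⟩ x H hx.1 hx.2 hH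
  have hq_le : ∫ x in 0..H, (p x H * h) ^ 2 ≤ P * h ^ 2 := by
    simp only [mul_pow, intervalIntegral.integral_mul_const]
    gcongr
    exact hP H ⟨hH₀.le, hH⟩ 0 H le_rfl hH₀.le hH
  have hsq_nonneg (f : ℝ → ℝ) : 0 ≤ ∫ x in 0..H, f x ^ 2 :=
    intervalIntegral.integral_nonneg hH₀.le fun x _ ↦ sq_nonneg (f x)
  have hT₀ := hsq_nonneg T
  have hw₀ := hsq_nonneg w
  have hq₀ := hsq_nonneg fun x ↦ p x H * h
  refine hequiv _ _ _ hT₀ hw₀ (sq_nonneg h) ?_ ?_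
  · refine (integral_sq_le_exp_mul_of_eq_sub_volterra_sub hk hH₀.le hT hq hNH hw).trans ?_
    rw [sub_zero]
    gcongr
  · refine (integral_sq_le_of_eq_sub_volterra_sub hk hH₀.le hT hq hNH hw).trans ?_
    rw [sub_zero, mul_assoc 3 P]
    gcongr

/-- Norm equivalence between the Lyapunov functional of the target variables
`(w,h)` and the spatial L² norm of the error variables `(T̃,h)`, uniformly over
thickness `H ∈ (0,H̄]`: there exist `M̲, M̄ > 0` with
`M̲(∫T̃² + h²) ≤ (1/2)∫w² + (ε/(2β))h² ≤ M̄(∫T̃² + h²)`. -/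
theorem lyapunov_norm_equivalence
    (D lam beta : ℝ) (hD : 0 < D) (hlam : 0 < lam) (hbeta : 0 < beta) :
    ∀ Hbar > (0 : ℝ), ∀ eps > (0 : ℝ),
      ∃ Ml > (0 : ℝ), ∃ Mu > (0 : ℝ),
        ∀ H ∈ Set.Ioc (0 : ℝ) Hbar, ∀ h : ℝ, ∀ T : ℝ → ℝ,
          ContinuousOn T (Set.Icc 0 H) →
          ∀ w : ℝ → ℝ,
            (∀ x, w x = T x - (∫ y in x..H, rker D lam x y * T y) - phiK D lam beta x H * h) →
            Ml * ((∫ x in (0 : ℝ)..H, (T x) ^ 2) + h ^ 2) ≤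
                (1 / 2 : ℝ) * (∫ x in (0 : ℝ)..H, (w x) ^ 2) + eps / (2 * beta) * h ^ 2 ∧
              (1 / 2 : ℝ) * (∫ x in (0 : ℝ)..H, (w x) ^ 2) + eps / (2 * beta) * h ^ 2 ≤
                Mu * ((∫ x in (0 : ℝ)..H, (T x) ^ 2) + h ^ 2) := by
  intro Hbar hHbar eps heps
  obtain ⟨Ml, hMl, Mu, hMu, hequiv⟩ :=
    lyapunov_norm_equivalence_general (continuous_rker D lam) (continuous_phiK D lam beta)
      hHbar.le one_half_pos (by positivity : 0 < eps / (2 * beta))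
  exact ⟨Ml, hMl, Mu, hMu, fun H hH h T hT w hw ↦ hequiv H hH h T hT w fun x _ ↦ hw x⟩
end
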